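/- Let P, Q, R ∈ ℂ[z₁,z₂,z₃] be homogeneous polynomials with deg P + deg Q = 2·deg R, and suppose the Jacobian determinant J(P,Q,R) is not the zero polynomial (equivalently, M is holomorphically nondegenerate). Then the real vector space g_c has dimension at most 3, i.e. 0 ≤ dim_ℝ g_c ≤ 3. -/

import Mathlib

open MvPolynomial Complex

noncomputable section

/-- `Φ(z) = P(z)·conj(Q(z)) + Q(z)·conj(P(z)) + R(z)·conj(R(z))`, so that the model
hypersurface is `M = {(z,w) : Im w = Φ(z)}`. -/
def Phi (P Q R : MvPolynomial (Fin 3) ℂ) (z : Fin 3 → ℂ) : ℂ :=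
  eval z P * (starRingEnd ℂ) (eval z Q) + eval z Q * (starRingEnd ℂ) (eval z P) +
    eval z R * (starRingEnd ℂ) (eval z R)

/-- `Φ_j(z) = (∂P/∂z_j)(z)·conj(Q(z)) + (∂Q/∂z_j)(z)·conj(P(z)) + (∂R/∂z_j)(z)·conj(R(z))`. -/
def PhiD (P Q R : MvPolynomial (Fin 3) ℂ) (j : Fin 3) (z : Fin 3 → ℂ) : ℂ :=
  eval z (pderiv j P) * (starRingEnd ℂ) (eval z Q) +
    eval z (pderiv j Q) * (starRingEnd ℂ) (eval z P) +
    eval z (pderiv j R) * (starRingEnd ℂ) (eval z R)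

/-- `g_c`: rigid infinitesimal CR automorphisms `Σ f_j(z) ∂/∂z_j` of `M` all of
whose monomials have total degree at least `2` and at most `d`. -/
def gcSet (P Q R : MvPolynomial (Fin 3) ℂ) (d : ℕ) : Set (Fin 3 → MvPolynomial (Fin 3) ℂ) :=
  {f | (∀ j, ∀ m ∈ (f j).support, 2 ≤ (m.sum fun _ e => e) ∧ (m.sum fun _ e => e) ≤ d) ∧
       ∀ z : Fin 3 → ℂ, (∑ j, eval z (f j) * PhiD P Q R j z).re = 0}

/-!
Let `f` be a vector field tangent to `M`. Since `P, Q, R` have nonzero Jacobian, they are linearly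
independent and `f` is determined by its action on them. Polarizing the tangency equation, so that
`z` and `conj z` become independent variables, shows that `f` maps `(Q, P, R)` to `A (P, Q, R)` with
`A` a skew-Hermitian matrix of constants. As `f` vanishes to second order at the origin it raises
degrees, so `A k l = 0` unless the polynomial numbered `l` in `(P, Q, R)` has larger degree than
that numbered `k` in `(Q, P, R)`. If `deg P ≤ deg Q`, this leaves only `A 1 1 ∈ iℝ` and
`A 1 2 = -conj (A 2 1) ∈ ℂ`, three real parameters: `f` acts on the span of `P, R, Q` through the
Heisenberg algebra of strictly triangular matrices in `𝔲(2, 1)`.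
-/

section Jacobian

open scoped Matrix

variable {R σ ι : Type*} [CommRing R]

/-- The Jacobian matrix of a family of polynomials, with rows indexed by the variables and columns
by the polynomials. The derivatives of the family along the vector field `∑ i, f i ∂/∂z_i` are thus
the entries of the row vector `f ᵥ* jacobianMatrix F`. -/
def jacobianMatrix (F : ι → MvPolynomial σ R) : Matrix σ ι (MvPolynomial σ R) :=
  Matrix.of fun i j => pderiv i (F j)

theorem linearIndependent_of_det_jacobianMatrix_ne_zero [IsDomain R] [Fintype σ] [DecidableEq σ]
    {F : σ → MvPolynomial σ R} (hF : (jacobianMatrix F).det ≠ 0) : LinearIndependent R F := by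
  refine Fintype.linearIndependent_iff.mpr fun c hc => ?_
  have hker : jacobianMatrix F *ᵥ (fun j => C (c j)) = 0 := by
    funext i
    simpa [jacobianMatrix, Matrix.mulVec, dotProduct, smul_eq_C_mul, mul_comm]
      using congrArg (pderiv i) hc
  have hC := Matrix.eq_zero_of_mulVec_eq_zero hF hker
  exact fun j => C_injective σ R (by simpa using congrFun hC j)

theorem mem_pow_idealOfVars_of_isHomogeneous {P : MvPolynomial σ R} {n : ℕ}
    (hP : P.IsHomogeneous n) : P ∈ idealOfVars σ R ^ n :=
  (mem_pow_idealOfVars_iff' n P).mpr fun _ hm => hP.coeff_eq_zero hm.ne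

theorem vecMul_jacobianMatrix_mem_pow_idealOfVars [Fintype σ] {F : ι → MvPolynomial σ R}
    {f : σ → MvPolynomial σ R} {j : ι} {k n : ℕ} (hf : ∀ i, f i ∈ idealOfVars σ R ^ (k + 1))
    (hF : (F j).IsHomogeneous n) : (f ᵥ* jacobianMatrix F) j ∈ idealOfVars σ R ^ (n + k) := by
  refine Ideal.sum_mem _ fun i _ => ?_
  have hprod : f i * pderiv i (F j) ∈ idealOfVars σ R ^ (k + 1) * idealOfVars σ R ^ (n - 1) :=
    Ideal.mul_mem_mul (hf i) (mem_pow_idealOfVars_of_isHomogeneous hF.pderiv)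
  rw [← pow_add] at hprod
  exact Ideal.pow_le_pow_right (by omega) hprod

theorem eq_zero_of_sum_smul_mem_pow_idealOfVars [Fintype ι] {F : ι → MvPolynomial σ R} {deg : ι → ℕ}
    (hF : LinearIndependent R F) (hdeg : ∀ i, (F i).IsHomogeneous (deg i)) {c : ι → R} {n : ℕ}
    (hc : ∑ i, c i • F i ∈ idealOfVars σ R ^ n) {j : ι} (hj : deg j < n) : c j = 0 := by
  classical
  have hcomponent : ∑ i, (if deg j = deg i then c i else 0) • F i = 0 := by
    calc ∑ i, (if deg j = deg i then c i else 0) • F i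
        = homogeneousComponent (deg j) (∑ i, c i • F i) := by
          simp only [map_sum, map_smul, homogeneousComponent_of_mem (hdeg _), ite_smul, smul_ite,
            zero_smul, smul_zero]
      _ = 0 := by
          ext m
          rw [coeff_homogeneousComponent, coeff_zero]
          split_ifs with hm
          · exact (mem_pow_idealOfVars_iff' n _).mp hc m (hm.trans_lt hj)
          · rfl
  simpa using Fintype.linearIndependent_iff.mp hF _ hcomponent j

end Jacobian

section Polarization

variable {σ ι : Type*}

-- In the coordinates `(z + w) / 2, (z - w) / 2i` the set `w = conj z` is the set of real points.
theorem eq_zero_of_eval_conj_eq_zero {H : MvPolynomial (σ ⊕ σ) ℂ}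
    (hH : ∀ z : σ → ℂ, eval (Sum.elim z (starRingEnd ℂ ∘ z)) H = 0) : H = 0 := by
  let H' : MvPolynomial (σ ⊕ σ) ℂ :=
    bind₁ (Sum.elim (fun i => X (Sum.inl i) + C I * X (Sum.inr i))
      fun i => X (Sum.inl i) - C I * X (Sum.inr i)) H
  have heval (x y : σ → ℂ) : eval (Sum.elim x y) H' =
      eval (Sum.elim (fun i => x i + I * y i) fun i => x i - I * y i) H := by
    simp only [H', ← aeval_eq_eval, aeval_bind₁]
    congr 2
    ext (i | i) <;> simp
  have hH' : H' = 0 := by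
    refine MvPolynomial.funext_set (fun _ => Set.range ((↑) : ℝ → ℂ))
      (fun _ => Set.infinite_range_of_injective Complex.ofReal_injective) fun v hv => ?_
    choose v' hv' using fun s => hv s (Set.mem_univ s)
    obtain rfl : (fun s => (v' s : ℂ)) = v := _root_.funext hv'
    have hreal := hH fun i => v' (Sum.inl i) + I * v' (Sum.inr i)
    simp only [Function.comp_def, map_add, map_mul, conj_ofReal, conj_I, neg_mul,
      ← sub_eq_add_neg] at hreal
    rw [← Sum.elim_comp_inl_inr (fun s => (v' s : ℂ)), map_zero, heval]
    exact hreal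
  refine MvPolynomial.funext fun v => ?_
  have hv := heval (fun i => (v (Sum.inl i) + v (Sum.inr i)) / 2)
    fun i => (v (Sum.inl i) - v (Sum.inr i)) / (2 * I)
  rw [hH', map_zero] at hv
  rw [map_zero, hv]
  congr 2
  ext (i | i) <;> simp only [Sum.elim_inl, Sum.elim_inr] <;> field_simp <;> ring

theorem sum_eval_mul_conj_eval_eq_zero [Fintype ι] {F G : ι → MvPolynomial σ ℂ}
    (h : ∀ z, ∑ i, eval z (F i) * (starRingEnd ℂ) (eval z (G i)) = 0) (z w : σ → ℂ) :
    ∑ i, eval z (F i) * (starRingEnd ℂ) (eval w (G i)) = 0 := by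
  let H : MvPolynomial (σ ⊕ σ) ℂ :=
    ∑ i, rename Sum.inl (F i) * rename Sum.inr (map (starRingEnd ℂ) (G i))
  have heval (z w : σ → ℂ) : eval (Sum.elim z (starRingEnd ℂ ∘ w)) H =
      ∑ i, eval z (F i) * (starRingEnd ℂ) (eval w (G i)) := by
    simp only [H, map_sum, map_mul, eval_rename, Sum.elim_comp_inl, Sum.elim_comp_inr, eval_map,
      eval₂_comp]
  have hH : H = 0 := eq_zero_of_eval_conj_eq_zero fun z => (heval z z).trans (h z)
  rw [← heval, hH, map_zero]

end Polarization

section SkewAdjoint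

variable {K X ι : Type*} [Field K] [StarRing K] [Fintype ι] {F : ι → X → K}

theorem mem_of_forall_sum_star_smul_mem {M : Type*} [AddCommGroup M] [Module K M]
    {V : Submodule K M} {G : ι → M} (hF : LinearIndependent K F)
    (h : ∀ x, ∑ k, star (F k x) • G k ∈ V) (k : ι) : G k ∈ V := by
  classical
  have hspan (v : ι → K) : ∑ k, star (v k) • G k ∈ V := by
    have hv : v ∈ Submodule.span K (Set.range (flip F)) :=
      span_flip_eq_top_iff_linearIndependent.mpr hF ▸ Submodule.mem_top
    induction hv using Submodule.span_induction with
    | mem _ hx =>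
      obtain ⟨x, rfl⟩ := hx
      exact h x
    | zero => simp
    | add u v _ _ hu hv => simpa [add_smul, Finset.sum_add_distrib] using V.add_mem hu hv
    | smul c v _ hv =>
      simpa only [Finset.smul_sum, smul_smul, Pi.smul_apply, smul_eq_mul, star_mul'] using
        V.smul_mem (star c) hv
  simpa [Pi.single_apply, apply_ite star] using hspan (Pi.single k 1)

theorem exists_skewAdjoint_of_sum_mul_star_add_eq_zero {G : ι → X → K}
    (hF : LinearIndependent K F)
    (h : ∀ x y, ∑ k, (G k x * star (F k y) + F k x * star (G k y)) = 0) :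
    ∃ A ∈ skewAdjoint (Matrix ι ι K), ∀ k, G k = ∑ l, A k l • F l := by
  have hmem (k : ι) : G k ∈ Submodule.span K (Set.range F) := by
    refine mem_of_forall_sum_star_smul_mem hF (fun y => ?_) k
    refine (Submodule.mem_span_range_iff_exists_fun K).mpr ⟨fun k => -star (G k y), ?_⟩
    funext x
    have hxy := h x y
    rw [Finset.sum_add_distrib] at hxy
    simpa [mul_comm] using (eq_neg_of_add_eq_zero_left hxy).symm
  choose A hA using fun k => (Submodule.mem_span_range_iff_exists_fun K).mp (hmem k)
  have hstar (y : X) (l : ι) : ∑ k, (A k l + star (A l k)) * star (F k y) = 0 := by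
    refine Fintype.linearIndependent_iff.mp hF
      (fun l => ∑ k, (A k l + star (A l k)) * star (F k y)) ?_ l
    funext x
    have hxy := h x y
    simp only [← hA, Finset.sum_apply, Pi.smul_apply, smul_eq_mul, star_sum, star_mul',
      Finset.sum_add_distrib, Finset.sum_mul, Finset.mul_sum] at hxy
    simp only [Finset.sum_apply, Pi.smul_apply, smul_eq_mul, add_mul, Finset.sum_add_distrib,
      Finset.sum_mul, Pi.zero_apply]
    rw [Finset.sum_comm, ← hxy]
    congr 1 <;> exact Finset.sum_congr rfl fun _ _ => Finset.sum_congr rfl fun _ _ => by ring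
  refine ⟨A, skewAdjoint.mem_iff.mpr ?_, fun k => (hA k).symm⟩
  ext k l
  have hcoeff := Fintype.linearIndependent_iff.mp hF (fun k => star (A k l + star (A l k))) (by
    funext y
    simpa [mul_comm] using congrArg star (hstar y l)) k
  rw [star_eq_zero] at hcoeff
  exact eq_neg_of_add_eq_zero_right hcoeff

end SkewAdjoint

theorem linearIndependent_eval {R σ ι : Type*} [CommRing R] [IsDomain R] [Infinite R]
    {F : ι → MvPolynomial σ R} (hF : LinearIndependent R F) :
    LinearIndependent R fun i (z : σ → R) => eval z (F i) := by
  let evalMap : MvPolynomial σ R →ₗ[R] (σ → R) → R := LinearMap.pi fun z => (aeval z).toLinearMap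
  have hinj : LinearMap.ker evalMap = ⊥ := LinearMap.ker_eq_bot'.mpr fun P hP =>
    MvPolynomial.funext fun z => by simpa [evalMap, aeval_eq_eval] using congrFun hP z
  exact hF.map' evalMap hinj

theorem exists_skewAdjoint_of_re_sum_eval_mul_conj_eq_zero {σ ι : Type*} [Fintype ι]
    {F G : ι → MvPolynomial σ ℂ} (hF : LinearIndependent ℂ F)
    (h : ∀ z, (∑ k, eval z (G k) * (starRingEnd ℂ) (eval z (F k))).re = 0) :
    ∃ A ∈ skewAdjoint (Matrix ι ι ℂ), ∀ k, G k = ∑ l, A k l • F l := by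
  have hdiag (z : σ → ℂ) : ∑ k : ι ⊕ ι, eval z (Sum.elim G F k) *
      (starRingEnd ℂ) (eval z (Sum.elim F G k)) = 0 := by
    have hre := Complex.add_conj (∑ k, eval z (G k) * (starRingEnd ℂ) (eval z (F k)))
    rw [h z] at hre
    simpa [Fintype.sum_sum_type, mul_comm] using hre
  have hpolar (z w : σ → ℂ) : ∑ k, (eval z (G k) * star (eval w (F k)) +
      eval z (F k) * star (eval w (G k))) = 0 := by
    simpa [Fintype.sum_sum_type, Finset.sum_add_distrib] using
      sum_eval_mul_conj_eval_eq_zero hdiag z w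
  obtain ⟨A, hA, hG⟩ := exists_skewAdjoint_of_sum_mul_star_add_eq_zero
    (linearIndependent_eval hF) hpolar
  refine ⟨A, hA, fun k => MvPolynomial.funext fun z => ?_⟩
  simpa using congrFun (hG k) z

theorem rank_span_le_of_forall_mem_span_range {K V W ι : Type*} [Ring K] [StrongRankCondition K]
    [AddCommGroup V] [Module K V] [AddCommGroup W] [Module K W] [Fintype ι] {T : V →ₗ[K] W}
    (hT : Function.Injective T) {s : Set V} {w : ι → W}
    (h : ∀ v ∈ s, T v ∈ Submodule.span K (Set.range w)) :
    Module.rank K (Submodule.span K s) ≤ Fintype.card ι := by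
  have hmem : ∀ v ∈ Submodule.span K s, T v ∈ Submodule.span K (Set.range w) := fun v hv =>
    Submodule.span_le (p := (Submodule.span K (Set.range w)).comap T).mpr h hv
  have hlift := LinearMap.lift_rank_le_of_injective (T.restrict hmem)
    fun x y hxy => Subtype.ext (hT (congrArg Subtype.val hxy))
  have hspan : Module.rank K (Submodule.span K (Set.range w)) ≤ Fintype.card ι := by
    have := Module.Finite.span_of_finite K (Set.finite_range w)
    rw [← Module.finrank_eq_rank, Nat.cast_le]
    exact finrank_range_le_card w
  simpa using hlift.trans (Cardinal.lift_le.mpr hspan)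

section Model

open scoped Matrix

variable {P Q R : MvPolynomial (Fin 3) ℂ} {p q r d : ℕ} {f : Fin 3 → MvPolynomial (Fin 3) ℂ}

theorem gcSet_swap : gcSet P Q R d = gcSet Q P R d := by
  have hPhiD : PhiD P Q R = PhiD Q P R := by
    funext j z
    simp only [PhiD]
    ring
  simp only [gcSet, hPhiD]

theorem det_jacobianMatrix_swap :
    (jacobianMatrix ![Q, P, R]).det = -(jacobianMatrix ![P, Q, R]).det := by
  simp only [jacobianMatrix, Matrix.det_fin_three, Matrix.of_apply, Matrix.cons_val]
  ring

theorem sum_eval_mul_PhiD (f : Fin 3 → MvPolynomial (Fin 3) ℂ) (z : Fin 3 → ℂ) :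
    ∑ j, eval z (f j) * PhiD P Q R j z =
      ∑ k, eval z ((f ᵥ* jacobianMatrix ![P, Q, R]) (Equiv.swap 0 1 k)) *
        (starRingEnd ℂ) (eval z (![P, Q, R] k)) := by
  simp only [PhiD, jacobianMatrix, Matrix.vecMul, dotProduct, Fin.sum_univ_three,
    Equiv.swap_apply_def, Matrix.of_apply, Matrix.cons_val, map_add, map_mul, ↓reduceIte,
    one_ne_zero, Fin.reduceEq]
  ring

theorem mem_sq_idealOfVars_of_mem_gcSet (hf : f ∈ gcSet P Q R d) (j : Fin 3) :
    f j ∈ idealOfVars (Fin 3) ℂ ^ 2 :=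
  (mem_pow_idealOfVars_iff 2 (f j)).mpr fun m hm => (hf.1 j m hm).1

theorem exists_skewAdjoint_of_mem_gcSet (hP : P.IsHomogeneous p) (hQ : Q.IsHomogeneous q)
    (hR : R.IsHomogeneous r) (hF : LinearIndependent ℂ ![P, Q, R]) (hf : f ∈ gcSet P Q R d) :
    ∃ A ∈ skewAdjoint (Matrix (Fin 3) (Fin 3) ℂ),
      (∀ k, (f ᵥ* jacobianMatrix ![P, Q, R]) (Equiv.swap 0 1 k) = ∑ l, A k l • ![P, Q, R] l) ∧
      ∀ k l, ![p, q, r] l ≤ ![p, q, r] (Equiv.swap 0 1 k) → A k l = 0 := by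
  obtain ⟨A, hA, hAF⟩ := exists_skewAdjoint_of_re_sum_eval_mul_conj_eq_zero hF
    (G := fun k => (f ᵥ* jacobianMatrix ![P, Q, R]) (Equiv.swap 0 1 k))
    fun z => by rw [← sum_eval_mul_PhiD, hf.2 z]
  have hdeg (k : Fin 3) : (![P, Q, R] k).IsHomogeneous (![p, q, r] k) := by
    fin_cases k <;> assumption
  refine ⟨A, hA, hAF, fun k l hkl => ?_⟩
  refine eq_zero_of_sum_smul_mem_pow_idealOfVars hF hdeg ?_ (Nat.lt_succ_of_le hkl)
  rw [← hAF]
  exact vecMul_jacobianMatrix_mem_pow_idealOfVars (mem_sq_idealOfVars_of_mem_gcSet hf) (hdeg _)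

theorem exists_vecMul_jacobianMatrix_eq (hP : P.IsHomogeneous p) (hQ : Q.IsHomogeneous q)
    (hR : R.IsHomogeneous r) (hpq : p ≤ q) (hF : LinearIndependent ℂ ![P, Q, R])
    (hf : f ∈ gcSet P Q R d) :
    ∃ (a : ℂ) (t : ℝ), f ᵥ* jacobianMatrix ![P, Q, R] =
      ![a • R + (t * I : ℂ) • Q, 0, -((starRingEnd ℂ) a • Q)] := by
  obtain ⟨A, hA, hAF, hdeg⟩ := exists_skewAdjoint_of_mem_gcSet hP hQ hR hF hf
  have hskew (k l : Fin 3) : (starRingEnd ℂ) (A k l) = -A l k :=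
    congrFun₂ (skewAdjoint.mem_iff (R := Matrix (Fin 3) (Fin 3) ℂ).mp hA) l k
  have hswap : Equiv.swap (0 : Fin 3) 1 2 = 2 := by decide
  have h₀₀ : A 0 0 = 0 := hdeg 0 0 (by simpa using hpq)
  have h₀₁ : A 0 1 = 0 := hdeg 0 1 (by simp)
  have h₁₀ : A 1 0 = 0 := hdeg 1 0 (by simp)
  have h₂₂ : A 2 2 = 0 := hdeg 2 2 (by simp [hswap])
  have h₀₂ : A 0 2 = 0 := by
    rcases le_or_gt r q with hrq | hqr
    · exact hdeg 0 2 (by simpa using hrq)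
    · have h₂₀ : A 2 0 = 0 := hdeg 2 0 (by simpa [hswap] using (hpq.trans_lt hqr).le)
      simpa [h₂₀] using hskew 2 0
  have h₂₀ : A 2 0 = 0 := by simpa [h₀₂] using (hskew 0 2).symm
  have h₂₁ : A 2 1 = -(starRingEnd ℂ) (A 1 2) := by rw [hskew, neg_neg]
  have h₁₁ : (A 1 1).re = 0 := by
    have := congrArg re (hskew 1 1)
    rw [conj_re, neg_re] at this
    linarith
  refine ⟨A 1 2, (A 1 1).im, ?_⟩
  have h₁₁' : ((A 1 1).im * I : ℂ) = A 1 1 := by apply Complex.ext <;> simp [h₁₁]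
  rw [h₁₁', ← neg_smul, ← h₂₁]
  funext k
  fin_cases k
  · simpa [Fin.sum_univ_three, h₁₀, add_comm] using hAF 1
  · simpa [Fin.sum_univ_three, h₀₀, h₀₁, h₀₂] using hAF 0
  · simpa [Fin.sum_univ_three, hswap, h₂₀, h₂₂] using hAF 2

theorem vecMul_jacobianMatrix_mem_span (hP : P.IsHomogeneous p) (hQ : Q.IsHomogeneous q)
    (hR : R.IsHomogeneous r) (hpq : p ≤ q) (hF : LinearIndependent ℂ ![P, Q, R])
    (hf : f ∈ gcSet P Q R d) :
    f ᵥ* jacobianMatrix ![P, Q, R] ∈ Submodule.span ℝ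
      (Set.range ![![R, 0, -Q], ![I • R, 0, I • Q], ![I • Q, 0, 0]]) := by
  obtain ⟨a, t, hfJ⟩ := exists_vecMul_jacobianMatrix_eq hP hQ hR hpq hF hf
  refine (Submodule.mem_span_range_iff_exists_fun ℝ).mpr ⟨![a.re, a.im, t], ?_⟩
  have hsmul (b : ℂ) (S : MvPolynomial (Fin 3) ℂ) : b • S = b.re • S + b.im • I • S := by
    conv_lhs => rw [← re_add_im b, add_smul, mul_smul, Complex.coe_smul, Complex.coe_smul]
  rw [hfJ]
  funext k
  fin_cases k
  · simp [Fin.sum_univ_three, mul_smul, hsmul a]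
  · simp [Fin.sum_univ_three]
  · simp [Fin.sum_univ_three, hsmul ((starRingEnd ℂ) a), add_comm]

end Model

theorem stmt11_general (P Q R : MvPolynomial (Fin 3) ℂ) (p q r d : ℕ)
    (hP : P.IsHomogeneous p) (hQ : Q.IsHomogeneous q) (hR : R.IsHomogeneous r)
    (hJ : (Matrix.of fun i j => pderiv i (![P, Q, R] j)).det ≠ 0) :
    Module.rank ℝ ↥(Submodule.span ℝ (gcSet P Q R d)) ≤ 3 := by
  change (jacobianMatrix ![P, Q, R]).det ≠ 0 at hJ
  wlog hpq : p ≤ q generalizing P Q p q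
  · rw [gcSet_swap]
    exact this Q P q p hQ hP (by rwa [det_jacobianMatrix_swap, neg_ne_zero]) (by omega)
  have hF := linearIndependent_of_det_jacobianMatrix_ne_zero hJ
  let T := (Matrix.vecMulLinear (jacobianMatrix ![P, Q, R])).restrictScalars ℝ
  have hT : Function.Injective T := (injective_iff_map_eq_zero T).mpr fun _ =>
    Matrix.eq_zero_of_vecMul_eq_zero hJ
  simpa using rank_span_le_of_forall_mem_span_range hT fun f hf =>
    vecMul_jacobianMatrix_mem_span hP hQ hR hpq hF hf

/-- For homogeneous `P, Q, R` with `deg P + deg Q = 2·deg R` and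
nonvanishing Jacobian, the space `g_c` has real dimension at most `3`. -/
theorem stmt11 (P Q R : MvPolynomial (Fin 3) ℂ) (p q r : ℕ)
    (hP : P.IsHomogeneous p) (hQ : Q.IsHomogeneous q) (hR : R.IsHomogeneous r)
    (hdeg : p + q = 2 * r)
    (hJ : (Matrix.of fun i j => pderiv i (![P, Q, R] j)).det ≠ 0) :
    Module.rank ℝ ↥(Submodule.span ℝ (gcSet P Q R (p + q))) ≤ 3 :=
  stmt11_general P Q R p q r (p + q) hP hQ hR hJ
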